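/- Let Λ' ⊂ ℝ^n be a full-rank lattice, σ_s, σ_w > 0, α = σ_s²/(σ_s²+σ_w²), σ_eff² = σ_s²σ_w²/(σ_s²+σ_w²). Let X ~ D_{Λ', σ_s} and W ~ N(0, σ_w² I_n) be independent and set W_eff = (1−α)X + αW. Then for every ε ∈ (0,1), Pr[‖W_eff‖ > √((1+ε)n) · σ_eff] ≤ exp(−(n/4)(ε² − ε³)). -/

import Mathlib

/-!
Write `θ_κ(x) = ∑_{y ∈ L} exp(-κ‖y + x‖²)`. The parallelogram law splits `θ_κ(u) θ_κ(v)` into a sum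
of products of theta functions at `u + v` and `u - v` over the cosets of `2L`, whence
`2 θ_κ(x)² ≤ θ_κ(2x) θ_κ(0) + θ_κ(0)²`. As `θ_κ` is bounded, taking suprema shows that it is maximal
at `0`. Tilting a discrete Gaussian by `exp ⟪u, ·⟫` only shifts it by `σ² u`, so this maximality
says that the discrete Gaussian is subgaussian with variance proxy `σ²`. Hence `(1 - α)X + αW` is
subgaussian with variance proxy `c = (1 - α)² σ_s² + α² σ_w²`, which is `σ_eff²` for the given `α`.
Averaging `exp ⟪g, x⟫` over a centred Gaussian vector `g` with covariance `τ² I` linearises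
`exp (τ²‖x‖²/2)`, so that its expectation is at most `(1 - cτ²)^{-n/2}`, and Markov's inequality
with `cτ² = ε / (1 + ε)` gives the tail.
-/

open MeasureTheory Real Filter Pointwise
open scoped ENNReal RealInnerProductSpace

noncomputable section

/-- The (continuous) Gaussian density with parameter `σ` on `ℝⁿ`:
`f_σ(x) = (2πσ²)^{-n/2} exp(-‖x‖²/(2σ²))`. -/
def gaussF (n : ℕ) (σ : ℝ) (x : EuclideanSpace ℝ (Fin n)) : ℝ :=
  (2 * π * σ ^ 2) ^ (-(n : ℝ) / 2) * Real.exp (-‖x‖ ^ 2 / (2 * σ ^ 2))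

/-- The Gaussian mass `f_σ(S) = Σ_{y ∈ S} f_σ(y)` of a (countable) set `S ⊆ ℝⁿ`. -/
def gaussMass (n : ℕ) (σ : ℝ) (S : Set (EuclideanSpace ℝ (Fin n))) : ℝ :=
  ∑' y : S, gaussF n σ y

/-- The Gaussian measure `N(0, σ² Iₙ)` on `ℝⁿ`, given by its density w.r.t. Lebesgue measure. -/
def gaussMeasure (n : ℕ) (σ : ℝ) : Measure (EuclideanSpace ℝ (Fin n)) :=
  volume.withDensity fun x => ENNReal.ofReal (gaussF n σ x)

/-- The coset `S + t` of a set `S ⊆ ℝⁿ`, i.e. `{x | x - t ∈ S}`. -/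
def coset (n : ℕ) (S : Set (EuclideanSpace ℝ (Fin n))) (t : EuclideanSpace ℝ (Fin n)) :
    Set (EuclideanSpace ℝ (Fin n)) := {x | x - t ∈ S}

/-- The Voronoi cell of `S`: `{x | ⟪x,y⟫ ≤ ‖y‖²/2 for all y ∈ S}`. -/
def voronoi (n : ℕ) (S : Set (EuclideanSpace ℝ (Fin n))) : Set (EuclideanSpace ℝ (Fin n)) :=
  {x | ∀ y ∈ S, ⟪x, y⟫ ≤ ‖y‖ ^ 2 / 2}

/-- The inverse error function `err⁻¹_ε(Λ)`: the least `s > 0` such that a standard Gaussian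
leaves `s · V(Λ)` with probability at most `ε`. -/
def errInv (n : ℕ) (ε : ℝ) (S : Set (EuclideanSpace ℝ (Fin n))) : ℝ :=
  sInf {s : ℝ | 0 < s ∧ gaussMeasure n 1 ((s • voronoi n S)ᶜ) ≤ ENNReal.ofReal ε}

/-- The Shannon entropy (in nats) of the discrete Gaussian `D_{S,σ}` supported on `S`,
which assigns mass `f_σ(y)/f_σ(S)` to each `y ∈ S`. -/
def dgEntropy (n : ℕ) (σ : ℝ) (S : Set (EuclideanSpace ℝ (Fin n))) : ℝ :=
  -∑' y : S, (gaussF n σ y / gaussMass n σ S) * Real.log (gaussF n σ y / gaussMass n σ S)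

/-- The flatness factor `ε_Λ(σ) = sup_{x ∈ V(Λ)} |V(Λ)·f_σ(Λ+x) − 1|`. -/
def flatness (n : ℕ) (L : Submodule ℤ (EuclideanSpace ℝ (Fin n))) (σ : ℝ) : ℝ :=
  ⨆ x : voronoi n (L : Set (EuclideanSpace ℝ (Fin n))),
    |ZLattice.covolume L volume *
        gaussMass n σ (coset n (L : Set (EuclideanSpace ℝ (Fin n))) x) - 1|

section FiberSums

lemma hasSum_tsum_fiber_mul_tsum_fiber {ι β : Type*} (φ : ι → β) {f g : ι → ℝ}
    (hf : Summable f) (hg : Summable g) :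
    HasSum (fun c => (∑' p : φ ⁻¹' {c}, f p) * ∑' q : φ ⁻¹' {c}, g q)
      (∑' z : ι × ι, {z : ι × ι | φ z.1 = φ z.2}.indicator (fun z => f z.1 * g z.2) z) := by
  classical
  set F : ι × ι → ℝ := {z : ι × ι | φ z.1 = φ z.2}.indicator fun z => f z.1 * g z.2 with hFdef
  have hF : Summable F := (summable_mul_of_summable_norm hf.norm hg.norm).indicator _
  have hrow (p : ι) : ∑' q, F (p, q) = f p * ∑' q : φ ⁻¹' {φ p}, g q := by
    rw [tsum_subtype (φ ⁻¹' {φ p}) g, ← tsum_mul_left]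
    refine tsum_congr fun q => ?_
    simp [hFdef, Set.indicator_apply, eq_comm]
  have hsum : HasSum (fun p => f p * ∑' q : φ ⁻¹' {φ p}, g q) (∑' z, F z) := by
    simpa only [hrow] using hF.hasSum.prod_fiberwise fun p => (hF.prod_factor p).hasSum
  have hfiber (c : β) : ∑' p : φ ⁻¹' {c}, f p * ∑' q : φ ⁻¹' {φ p}, g q
      = (∑' p : φ ⁻¹' {c}, f p) * ∑' q : φ ⁻¹' {c}, g q := by
    rw [← tsum_mul_right]
    exact tsum_congr fun ⟨p, (hp : φ p = c)⟩ => by rw [hp]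
  simpa only [hfiber] using hsum.tsum_fiberwise φ

/-- The subgroup `2G` of an abelian group `G`. -/
abbrev doubles (G : Type*) [AddCommGroup G] : AddSubgroup G := (nsmulAddMonoidHom 2).range

lemma hasSum_tsum_coset_mul_tsum_coset {G : Type*} [AddCommGroup G] [IsAddTorsionFree G]
    {f g : G → ℝ} (hf : Summable f) (hg : Summable g) :
    HasSum (fun c : G ⧸ doubles G =>
        (∑' p : QuotientAddGroup.mk ⁻¹' {c}, f p) * ∑' q : QuotientAddGroup.mk ⁻¹' {c}, g q)
      (∑' z : G × G, f (z.1 + z.2) * g (z.1 - z.2)) := by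
  let sumDiff : G × G → G × G := fun z => (z.1 + z.2, z.1 - z.2)
  have hinj : Function.Injective sumDiff := by
    rintro ⟨y, z⟩ ⟨y', z'⟩ h
    obtain ⟨hs, hd⟩ : y + z = y' + z' ∧ y - z = y' - z' := Prod.mk.inj h
    obtain rfl : y = y' := nsmul_right_injective two_ne_zero <| by
      simpa [two_nsmul] using congr($hs + $hd)
    simpa using hs
  let sameCoset : Set (G × G) := {z | (z.1 : G ⧸ doubles G) = z.2}
  have hmem (z : G × G) : sumDiff z ∈ sameCoset :=
    QuotientAddGroup.eq.2 ⟨-z.2, by simp only [nsmulAddMonoidHom_apply, sumDiff]; abel⟩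
  have hrange : sameCoset ⊆ Set.range sumDiff := by
    rintro ⟨p, q⟩ hpq
    obtain ⟨z, hz⟩ := QuotientAddGroup.eq.1 hpq
    rw [nsmulAddMonoidHom_apply] at hz
    refine ⟨(p + z, -z), Prod.ext (by simp [sumDiff]) ?_⟩
    simp [sumDiff, add_assoc, ← two_nsmul, hz]
  have hreindex := hinj.tsum_eq
    (f := sameCoset.indicator fun z => f z.1 * g z.2) (Set.support_indicator_subset.trans hrange)
  simp only [Set.indicator_of_mem (hmem _)] at hreindex
  rw [hreindex]
  exact hasSum_tsum_fiber_mul_tsum_fiber _ hf hg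

end FiberSums

section Theta

/-- The theta function `θ_κ(x) = ∑_{y ∈ L} exp(-κ‖y + x‖²)` of the shifted lattice `L + x`, i.e. its
Gaussian mass up to normalisation. -/
def latticeTheta {E : Type*} [NormedAddCommGroup E] (L : Submodule ℤ E) (κ : ℝ) (x : E) : ℝ :=
  ∑' y : L, exp (-κ * ‖(y : E) + x‖ ^ 2)

/-- The part of the theta function of `L + x` that comes from the coset `c` of `2L` in `L`. -/
def cosetTheta {E : Type*} [NormedAddCommGroup E] (L : Submodule ℤ E) (κ : ℝ) (c : L ⧸ doubles L)
    (x : E) : ℝ :=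
  ∑' p : ((↑) : L → L ⧸ doubles L) ⁻¹' {c}, exp (-κ * ‖((p : L) : E) + x‖ ^ 2)

lemma latticeTheta_lattice_add {E : Type*} [NormedAddCommGroup E] (L : Submodule ℤ E) (κ : ℝ)
    (y : L) (x : E) : latticeTheta L κ (y + x) = latticeTheta L κ x := by
  simpa only [latticeTheta, Equiv.coe_addRight, Submodule.coe_add, add_assoc] using
    (Equiv.addRight y).tsum_eq fun z : L => exp (-κ * ‖(z : E) + x‖ ^ 2)

section NormedSpace

variable {E : Type*} [NormedAddCommGroup E] [NormedSpace ℝ E] [FiniteDimensional ℝ E]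
  (L : Submodule ℤ E) [DiscreteTopology L] {κ : ℝ}

lemma tendsto_norm_lattice_add (x : E) :
    Tendsto (fun y : L => ‖(y : E) + x‖) cofinite atTop := by
  have hL : IsDiscrete (L.toAddSubgroup : Set E) := isDiscrete_iff_discreteTopology.2 ‹_›
  exact tendsto_norm_cocompact_atTop.comp
    ((Homeomorph.addRight x).isClosedEmbedding.tendsto_cocompact.comp
      (L.toAddSubgroup.tendsto_coe_cofinite_of_discrete hL))

lemma summable_exp_neg_mul_sq_norm_lattice_add (hκ : 0 < κ) (x : E) :
    Summable fun y : L => exp (-κ * ‖(y : E) + x‖ ^ 2) := by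
  set r : ℝ := -(Module.finrank ℤ L + 1)
  have hpow := ZLattice.summable_norm_sub_rpow L r (by simp [r]) (-x)
  refine summable_of_isBigO hpow ?_
  simpa [Function.comp_def] using ((rexp_neg_quadratic_isLittleO_rpow_atTop (neg_neg_of_pos hκ) 0
    r).comp_tendsto (tendsto_norm_lattice_add L x)).isBigO

lemma latticeTheta_zero_pos (hκ : 0 < κ) : 0 < latticeTheta L κ 0 :=
  (summable_exp_neg_mul_sq_norm_lattice_add L hκ 0).tsum_pos (fun _ => (exp_pos _).le) 0 (exp_pos _)

-- Translate `x` by `L` so that `‖x‖ ≤ ‖y + x‖` for all `y ∈ L`; then `‖y‖ ≤ 2‖y + x‖`.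
lemma latticeTheta_le_latticeTheta_div_four_zero (hκ : 0 < κ) (x : E) :
    latticeTheta L κ x ≤ latticeTheta L (κ / 4) 0 := by
  obtain ⟨y₀, hy₀⟩ := (tendsto_norm_lattice_add L x).exists_forall_le
  rw [← latticeTheta_lattice_add L κ y₀ x]
  refine (summable_exp_neg_mul_sq_norm_lattice_add L hκ _).tsum_le_tsum (fun y => ?_)
    (summable_exp_neg_mul_sq_norm_lattice_add L (by positivity) _)
  have hmin : ‖(y₀ : E) + x‖ ≤ ‖(y : E) + (y₀ + x)‖ := by
    simpa [add_assoc] using hy₀ (y + y₀)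
  have hnorm : ‖(y : E)‖ ≤ 2 * ‖(y : E) + (y₀ + x)‖ := by
    linarith [norm_le_add_norm_add (y : E) (y₀ + x)]
  have hsq : ‖(y : E)‖ ^ 2 ≤ (2 * ‖(y : E) + (y₀ + x)‖) ^ 2 := by gcongr
  rw [add_zero, exp_le_exp]
  nlinarith

end NormedSpace

section InnerProductSpace

variable {E : Type*} [NormedAddCommGroup E] [InnerProductSpace ℝ E]

lemma exp_neg_mul_sq_norm_mul_exp_neg_mul_sq_norm (κ : ℝ) (a b : E) :
    exp (-κ * ‖a‖ ^ 2) * exp (-κ * ‖b‖ ^ 2)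
      = exp (-(κ / 2) * ‖a + b‖ ^ 2) * exp (-(κ / 2) * ‖a - b‖ ^ 2) := by
  simp only [← exp_add]
  congr 1
  linear_combination (κ / 2) * parallelogram_law_with_norm ℝ a b

variable [FiniteDimensional ℝ E] (L : Submodule ℤ E) [DiscreteTopology L] {κ : ℝ}

lemma hasSum_cosetTheta_mul_cosetTheta (hκ : 0 < κ) (u v : E) :
    HasSum (fun c => cosetTheta L (κ / 2) c (u + v) * cosetTheta L (κ / 2) c (u - v))
      (latticeTheta L κ u * latticeTheta L κ v) := by
  have : IsAddTorsionFree E := .of_isTorsionFree ℝ E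
  have : IsAddTorsionFree L := .of_isTorsionFree ℤ L
  have hθ := summable_exp_neg_mul_sq_norm_lattice_add L hκ
  have hθ₂ := summable_exp_neg_mul_sq_norm_lattice_add L (half_pos hκ)
  have hprod : latticeTheta L κ u * latticeTheta L κ v
      = ∑' z : L × L, exp (-(κ / 2) * ‖((z.1 + z.2 : L) : E) + (u + v)‖ ^ 2)
        * exp (-(κ / 2) * ‖((z.1 - z.2 : L) : E) + (u - v)‖ ^ 2) := by
    rw [latticeTheta, latticeTheta, (hθ u).tsum_mul_tsum (hθ v)
      (summable_mul_of_summable_norm (hθ u).norm (hθ v).norm)]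
    refine tsum_congr fun ⟨y, z⟩ => ?_
    rw [exp_neg_mul_sq_norm_mul_exp_neg_mul_sq_norm, add_add_add_comm, add_sub_add_comm, L.coe_add,
      L.coe_sub]
  rw [hprod]
  simpa only [cosetTheta] using hasSum_tsum_coset_mul_tsum_coset (hθ₂ (u + v)) (hθ₂ (u - v))

lemma two_mul_latticeTheta_sq_le (hκ : 0 < κ) (x : E) :
    2 * latticeTheta L κ x ^ 2
      ≤ latticeTheta L κ (x + x) * latticeTheta L κ 0 + latticeTheta L κ 0 ^ 2 := by
  have hxx := (hasSum_cosetTheta_mul_cosetTheta L hκ x x).mul_left 2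
  have hsq := (hasSum_cosetTheta_mul_cosetTheta L hκ (x + x) 0).add
    (hasSum_cosetTheta_mul_cosetTheta L hκ 0 0)
  simp only [add_zero, sub_zero, sub_self, ← mul_assoc, ← sq] at hxx hsq
  simpa only [mul_assoc, ← sq] using hasSum_le (fun c => two_mul_le_add_sq _ _) hxx hsq

lemma latticeTheta_le_latticeTheta_zero (hκ : 0 < κ) (x : E) :
    latticeTheta L κ x ≤ latticeTheta L κ 0 := by
  have hbdd : BddAbove (Set.range (latticeTheta L κ)) :=
    ⟨_, Set.forall_mem_range.2 (latticeTheta_le_latticeTheta_div_four_zero L hκ)⟩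
  set θ := latticeTheta L κ 0
  set M := ⨆ x, latticeTheta L κ x
  have hle (x : E) : latticeTheta L κ x ≤ M := le_ciSup hbdd x
  have hθ : 0 < θ := latticeTheta_zero_pos L hκ
  have hM : M ^ 2 ≤ (M * θ + θ ^ 2) / 2 := by
    refine (Real.le_sqrt' (hθ.trans_le (hle 0))).1 (ciSup_le fun x => Real.le_sqrt_of_sq_le ?_)
    have := mul_le_mul_of_nonneg_right (hle (x + x)) hθ.le
    linarith [two_mul_latticeTheta_sq_le L hκ x]
  nlinarith [hle x, hle 0]

end InnerProductSpace

end Theta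

section GaussianDensity

variable {n : ℕ} {σ : ℝ}

lemma gaussF_nonneg (n : ℕ) (σ : ℝ) (x : EuclideanSpace ℝ (Fin n)) : 0 ≤ gaussF n σ x := by
  unfold gaussF
  positivity

lemma continuous_gaussF (n : ℕ) (σ : ℝ) : Continuous (gaussF n σ) := by
  unfold gaussF
  fun_prop

lemma gaussF_mul_exp_inner (hσ : σ ≠ 0) (u x : EuclideanSpace ℝ (Fin n)) :
    gaussF n σ x * exp ⟪u, x⟫ = exp (σ ^ 2 * ‖u‖ ^ 2 / 2) * gaussF n σ (x - σ ^ 2 • u) := by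
  rw [gaussF, gaussF, mul_assoc, mul_left_comm (exp _), ← exp_add, ← exp_add, norm_sub_sq_real,
    inner_smul_right, norm_smul, real_inner_comm x u, norm_pow, Real.norm_eq_abs, sq_abs]
  congr 2
  field_simp
  ring

lemma gaussF_sub_eq (n : ℕ) (σ : ℝ) (x v : EuclideanSpace ℝ (Fin n)) :
    gaussF n σ (x - v)
      = (2 * π * σ ^ 2) ^ (-(n : ℝ) / 2) * exp (-(1 / (2 * σ ^ 2)) * ‖x + -v‖ ^ 2) := by
  rw [gaussF, ← sub_eq_add_neg]
  ring_nf

variable (L : Submodule ℤ (EuclideanSpace ℝ (Fin n)))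

lemma tsum_gaussF_sub_eq_mul_latticeTheta (σ : ℝ) (v : EuclideanSpace ℝ (Fin n)) :
    ∑' y : (L : Set (EuclideanSpace ℝ (Fin n))), gaussF n σ (y - v)
      = (2 * π * σ ^ 2) ^ (-(n : ℝ) / 2) * latticeTheta L (1 / (2 * σ ^ 2)) (-v) := by
  simp only [gaussF_sub_eq, tsum_mul_left]
  rfl

lemma gaussMass_eq_mul_latticeTheta (σ : ℝ) :
    gaussMass n σ L = (2 * π * σ ^ 2) ^ (-(n : ℝ) / 2) * latticeTheta L (1 / (2 * σ ^ 2)) 0 := by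
  simpa only [gaussMass, sub_zero, neg_zero] using tsum_gaussF_sub_eq_mul_latticeTheta L σ 0

variable [DiscreteTopology L]

lemma summable_gaussF_sub (hσ : σ ≠ 0) (v : EuclideanSpace ℝ (Fin n)) :
    Summable fun y : (L : Set (EuclideanSpace ℝ (Fin n))) => gaussF n σ (y - v) := by
  simp only [gaussF_sub_eq]
  exact (summable_exp_neg_mul_sq_norm_lattice_add L (by positivity) (-v)).mul_left _

lemma gaussMass_pos (hσ : σ ≠ 0) : 0 < gaussMass n σ L := by
  rw [gaussMass_eq_mul_latticeTheta]
  have := latticeTheta_zero_pos L (κ := 1 / (2 * σ ^ 2)) (by positivity)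
  positivity

lemma tsum_gaussF_sub_le_gaussMass (hσ : σ ≠ 0) (v : EuclideanSpace ℝ (Fin n)) :
    ∑' y : (L : Set (EuclideanSpace ℝ (Fin n))), gaussF n σ (y - v) ≤ gaussMass n σ L := by
  rw [tsum_gaussF_sub_eq_mul_latticeTheta, gaussMass_eq_mul_latticeTheta]
  gcongr
  exact latticeTheta_le_latticeTheta_zero L (by positivity) _

end GaussianDensity

section GaussianMeasure

variable {n : ℕ} {σ : ℝ}

lemma lintegral_ofReal_gaussMeasure {f : EuclideanSpace ℝ (Fin n) → ℝ} (hf : Measurable f) :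
    ∫⁻ x, ENNReal.ofReal (f x) ∂gaussMeasure n σ
      = ∫⁻ x, ENNReal.ofReal (gaussF n σ x * f x) := by
  rw [gaussMeasure, lintegral_withDensity_eq_lintegral_mul _
    (continuous_gaussF n σ).measurable.ennreal_ofReal hf.ennreal_ofReal]
  simp only [Pi.mul_apply, ENNReal.ofReal_mul (gaussF_nonneg n σ _)]

lemma lintegral_exp_neg_mul_sq_norm (n : ℕ) {b : ℝ} (hb : 0 < b) :
    ∫⁻ x : EuclideanSpace ℝ (Fin n), ENNReal.ofReal (exp (-b * ‖x‖ ^ 2))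
      = ENNReal.ofReal ((π / b) ^ ((n : ℝ) / 2)) := by
  have hint := GaussianFourier.integral_rexp_neg_mul_sq_norm (V := EuclideanSpace ℝ (Fin n)) hb
  rw [finrank_euclideanSpace_fin] at hint
  rw [← hint, ofReal_integral_eq_lintegral_ofReal
    (.of_integral_ne_zero <| by rw [hint]; positivity) (.of_forall fun _ => (exp_pos _).le)]

lemma lintegral_exp_sq_norm_gaussMeasure (n : ℕ) {c : ℝ} (hσ : σ ≠ 0) (hc : c * σ ^ 2 < 1) :
    ∫⁻ x, ENNReal.ofReal (exp (c * ‖x‖ ^ 2 / 2)) ∂gaussMeasure n σ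
      = ENNReal.ofReal ((1 - c * σ ^ 2) ^ (-(n : ℝ) / 2)) := by
  set K := 2 * π * σ ^ 2 with hK
  have hK0 : 0 < K := by positivity
  have hc' : 0 < 1 - c * σ ^ 2 := sub_pos.2 hc
  set b := (1 - c * σ ^ 2) / (2 * σ ^ 2) with hb
  have hb0 : 0 < b := by positivity
  have hdensity (x : EuclideanSpace ℝ (Fin n)) :
      gaussF n σ x * exp (c * ‖x‖ ^ 2 / 2) = K ^ (-(n : ℝ) / 2) * exp (-b * ‖x‖ ^ 2) := by
    rw [gaussF, mul_assoc, ← exp_add, hb]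
    congr 2
    field_simp
    ring
  have hπb : π / b = K * (1 - c * σ ^ 2)⁻¹ := by
    rw [hb, hK]
    field_simp
  rw [lintegral_ofReal_gaussMeasure (by fun_prop)]
  simp only [hdensity, ENNReal.ofReal_mul (rpow_nonneg hK0.le _)]
  rw [lintegral_const_mul _ (by fun_prop), lintegral_exp_neg_mul_sq_norm n hb0,
    ← ENNReal.ofReal_mul (rpow_nonneg hK0.le _), hπb, mul_rpow hK0.le (by positivity),
    ← mul_assoc, ← rpow_add hK0, inv_rpow hc'.le, ← rpow_neg hc'.le]
  simp [neg_div]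

lemma isProbabilityMeasure_gaussMeasure (n : ℕ) (hσ : σ ≠ 0) :
    IsProbabilityMeasure (gaussMeasure n σ) :=
  ⟨by simpa using lintegral_exp_sq_norm_gaussMeasure (c := 0) n hσ (by simp)⟩

lemma lintegral_exp_inner_gaussMeasure (hσ : σ ≠ 0) (u : EuclideanSpace ℝ (Fin n)) :
    ∫⁻ x, ENNReal.ofReal (exp ⟪u, x⟫) ∂gaussMeasure n σ
      = ENNReal.ofReal (exp (σ ^ 2 * ‖u‖ ^ 2 / 2)) := by
  have hcont := continuous_gaussF n σ
  have hmass : ∫⁻ x, ENNReal.ofReal (gaussF n σ x) = 1 := by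
    simpa [gaussMeasure] using (isProbabilityMeasure_gaussMeasure n hσ).measure_univ
  rw [lintegral_ofReal_gaussMeasure (by fun_prop)]
  simp only [gaussF_mul_exp_inner hσ, ENNReal.ofReal_mul (exp_pos _).le]
  rw [lintegral_const_mul _ (by fun_prop),
    lintegral_sub_right_eq_self (fun x => ENNReal.ofReal (gaussF n σ x)), hmass, mul_one]

end GaussianMeasure

section DiscreteGaussian

variable {n : ℕ} {σ : ℝ}

/-- The discrete Gaussian distribution `D_{S,σ}`, as a measure on the ambient space: each `y ∈ S`
has mass `f_σ(y) / f_σ(S)`. -/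
def discreteGaussian (n : ℕ) (σ : ℝ) (S : Set (EuclideanSpace ℝ (Fin n))) :
    Measure (EuclideanSpace ℝ (Fin n)) :=
  Measure.sum fun y : S =>
    ENNReal.ofReal (gaussF n σ y / gaussMass n σ S) • Measure.dirac (y : EuclideanSpace ℝ (Fin n))

lemma gaussF_div_gaussMass_nonneg (n : ℕ) (σ : ℝ) (S : Set (EuclideanSpace ℝ (Fin n)))
    (x : EuclideanSpace ℝ (Fin n)) : 0 ≤ gaussF n σ x / gaussMass n σ S :=
  div_nonneg (gaussF_nonneg n σ x) (tsum_nonneg fun _ => gaussF_nonneg n σ _)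

lemma lintegral_discreteGaussian (n : ℕ) (σ : ℝ) (S : Set (EuclideanSpace ℝ (Fin n)))
    (f : EuclideanSpace ℝ (Fin n) → ℝ≥0∞) :
    ∫⁻ x, f x ∂discreteGaussian n σ S
      = ∑' y : S, ENNReal.ofReal (gaussF n σ y / gaussMass n σ S) * f y := by
  simp only [discreteGaussian, lintegral_sum_measure, lintegral_smul_measure, lintegral_dirac,
    smul_eq_mul]

lemma tsum_gaussF_div_mul_setIntegral_gaussF {σw : ℝ} (hσw : σw ≠ 0) (σs : ℝ)
    (S : Set (EuclideanSpace ℝ (Fin n)))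
    {T : Set (EuclideanSpace ℝ (Fin n) × EuclideanSpace ℝ (Fin n))} (hT : MeasurableSet T) :
    ∑' x : S, gaussF n σs x / gaussMass n σs S * ∫ w in Prod.mk ↑x ⁻¹' T, gaussF n σw w
      = ((discreteGaussian n σs S).prod (gaussMeasure n σw)).real T := by
  have := isProbabilityMeasure_gaussMeasure n hσw
  have hslice (x : EuclideanSpace ℝ (Fin n)) :
      ∫ w in Prod.mk x ⁻¹' T, gaussF n σw w = (gaussMeasure n σw).real (Prod.mk x ⁻¹' T) := by
    rw [measureReal_def, gaussMeasure, withDensity_apply _ (measurable_prodMk_left hT),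
      integral_eq_lintegral_of_nonneg_ae (.of_forall (gaussF_nonneg n σw))
        (continuous_gaussF n σw).aestronglyMeasurable]
  rw [measureReal_def, Measure.prod_apply hT, lintegral_discreteGaussian,
    ENNReal.tsum_toReal_eq fun x => ENNReal.mul_ne_top ENNReal.ofReal_ne_top (measure_ne_top _ _)]
  refine tsum_congr fun x => ?_
  rw [ENNReal.toReal_mul, ENNReal.toReal_ofReal (gaussF_div_gaussMass_nonneg n σs S x), hslice,
    measureReal_def]

end DiscreteGaussian

lemma one_add_le_exp_sub_sq_add_cube {ε : ℝ} (hε : 0 ≤ ε) :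
    1 + ε ≤ exp (ε - ε ^ 2 / 2 + ε ^ 3 / 2) := by
  have hy : 0 ≤ ε - ε ^ 2 / 2 + ε ^ 3 / 2 := by
    nlinarith [mul_nonneg hε (sq_nonneg (ε - 1 / 2))]
  refine le_trans ?_ (quadratic_le_exp_of_nonneg hy)
  nlinarith [sq_nonneg (ε * (ε * (ε - 1))), sq_nonneg (ε ^ 2)]

/-- A measure `μ` is subgaussian with variance proxy `c` if `∫ exp ⟪u, x⟫ dμ(x) ≤ exp(c‖u‖²/2)` for
all `u`. With the Lebesgue integral in `[0, ∞]`, the bound includes integrability, and `u = 0` gives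
`μ(E) ≤ 1`. -/
def IsSubgaussian {E : Type*} [NormedAddCommGroup E] [InnerProductSpace ℝ E] [MeasurableSpace E]
    (μ : Measure E) (c : ℝ) : Prop :=
  ∀ u : E, ∫⁻ x, ENNReal.ofReal (exp ⟪u, x⟫) ∂μ ≤ ENNReal.ofReal (exp (c * ‖u‖ ^ 2 / 2))

lemma isSubgaussian_gaussMeasure (n : ℕ) {σ : ℝ} (hσ : σ ≠ 0) :
    IsSubgaussian (gaussMeasure n σ) (σ ^ 2) :=
  fun u => (lintegral_exp_inner_gaussMeasure hσ u).le

lemma isSubgaussian_discreteGaussian {n : ℕ} (L : Submodule ℤ (EuclideanSpace ℝ (Fin n)))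
    [DiscreteTopology L] {σ : ℝ} (hσ : σ ≠ 0) :
    IsSubgaussian (discreteGaussian n σ L) (σ ^ 2) := by
  intro u
  rw [lintegral_discreteGaussian]
  set M := gaussMass n σ L
  have hM : 0 < M := gaussMass_pos L hσ
  set e := exp (σ ^ 2 * ‖u‖ ^ 2 / 2)
  have htilt (y : EuclideanSpace ℝ (Fin n)) : ENNReal.ofReal (gaussF n σ y / M) *
      ENNReal.ofReal (exp ⟪u, y⟫) = ENNReal.ofReal (e / M * gaussF n σ (y - σ ^ 2 • u)) := by
    rw [← ENNReal.ofReal_mul' (exp_pos _).le, div_mul_eq_mul_div, gaussF_mul_exp_inner hσ,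
      mul_div_right_comm]
  simp only [htilt]
  rw [← ENNReal.ofReal_tsum_of_nonneg
    (fun _ => mul_nonneg (by positivity) (gaussF_nonneg n σ _))
    ((summable_gaussF_sub L hσ _).mul_left _), tsum_mul_left]
  apply ENNReal.ofReal_le_ofReal
  calc e / M * ∑' y : (L : Set (EuclideanSpace ℝ (Fin n))), gaussF n σ (y - σ ^ 2 • u)
      ≤ e / M * M := by
        gcongr
        exact tsum_gaussF_sub_le_gaussMass L hσ _
    _ = e := div_mul_cancel₀ e hM.ne'

namespace IsSubgaussian

section InnerProductSpace

variable {E : Type*} [NormedAddCommGroup E] [InnerProductSpace ℝ E] [MeasurableSpace E]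
  {μ ν : Measure E} {c d : ℝ}

lemma isFiniteMeasure (hμ : IsSubgaussian μ c) : IsFiniteMeasure μ :=
  ⟨(show μ Set.univ ≤ 1 by simpa using hμ 0).trans_lt ENNReal.one_lt_top⟩

lemma map_smul_add_smul [BorelSpace E] [SecondCountableTopology E] (hμ : IsSubgaussian μ c)
    (hν : IsSubgaussian ν d) (p q : ℝ) :
    IsSubgaussian ((μ.prod ν).map fun z => p • z.1 + q • z.2) (p ^ 2 * c + q ^ 2 * d) := by
  intro u
  have := hν.isFiniteMeasure
  have hmeas (v : E) : Measurable fun x => ENNReal.ofReal (exp ⟪v, x⟫) := by fun_prop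
  rw [lintegral_map (hmeas u) (by fun_prop)]
  calc ∫⁻ z, ENNReal.ofReal (exp ⟪u, p • z.1 + q • z.2⟫) ∂μ.prod ν
      = ∫⁻ z, ENNReal.ofReal (exp ⟪p • u, z.1⟫) * ENNReal.ofReal (exp ⟪q • u, z.2⟫) ∂μ.prod ν := by
        simp only [inner_add_right, real_inner_smul_right, real_inner_smul_left, exp_add,
          ENNReal.ofReal_mul (exp_pos _).le]
    _ = (∫⁻ x, ENNReal.ofReal (exp ⟪p • u, x⟫) ∂μ) * ∫⁻ w, ENNReal.ofReal (exp ⟪q • u, w⟫) ∂ν :=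
        lintegral_prod_mul (hmeas _).aemeasurable (hmeas _).aemeasurable
    _ ≤ ENNReal.ofReal (exp (c * ‖p • u‖ ^ 2 / 2)) * ENNReal.ofReal (exp (d * ‖q • u‖ ^ 2 / 2)) :=
        mul_le_mul' (hμ _) (hν _)
    _ = ENNReal.ofReal (exp ((p ^ 2 * c + q ^ 2 * d) * ‖u‖ ^ 2 / 2)) := by
        rw [← ENNReal.ofReal_mul (exp_pos _).le, ← exp_add]
        simp only [norm_smul, mul_pow, Real.norm_eq_abs, sq_abs]
        ring_nf

end InnerProductSpace

variable {n : ℕ} {μ : Measure (EuclideanSpace ℝ (Fin n))} {c τ : ℝ}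

lemma lintegral_exp_sq_norm_le (hμ : IsSubgaussian μ c) (hτ : τ ≠ 0) (hcτ : c * τ ^ 2 < 1) :
    ∫⁻ x, ENNReal.ofReal (exp (τ ^ 2 * ‖x‖ ^ 2 / 2)) ∂μ
      ≤ ENNReal.ofReal ((1 - c * τ ^ 2) ^ (-(n : ℝ) / 2)) := by
  have := hμ.isFiniteMeasure
  have := isProbabilityMeasure_gaussMeasure n hτ
  calc ∫⁻ x, ENNReal.ofReal (exp (τ ^ 2 * ‖x‖ ^ 2 / 2)) ∂μ
      = ∫⁻ x, ∫⁻ g, ENNReal.ofReal (exp ⟪x, g⟫) ∂gaussMeasure n τ ∂μ := by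
        simp only [lintegral_exp_inner_gaussMeasure hτ]
    _ = ∫⁻ g, ∫⁻ x, ENNReal.ofReal (exp ⟪g, x⟫) ∂μ ∂gaussMeasure n τ := by
        simp only [lintegral_lintegral_swap (μ := μ) (ν := gaussMeasure n τ)
          (f := fun x g => ENNReal.ofReal (exp ⟪x, g⟫)) (by fun_prop), real_inner_comm]
    _ ≤ ∫⁻ g, ENNReal.ofReal (exp (c * ‖g‖ ^ 2 / 2)) ∂gaussMeasure n τ := lintegral_mono hμ
    _ = ENNReal.ofReal ((1 - c * τ ^ 2) ^ (-(n : ℝ) / 2)) :=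
        lintegral_exp_sq_norm_gaussMeasure n hτ hcτ

lemma measureReal_lt_norm_le (hμ : IsSubgaussian μ c) (hτ : τ ≠ 0) (hcτ : c * τ ^ 2 < 1) {r : ℝ}
    (hr : 0 ≤ r) :
    μ.real {x | r < ‖x‖} ≤ exp (-(τ ^ 2 * r ^ 2 / 2)) * (1 - c * τ ^ 2) ^ (-(n : ℝ) / 2) := by
  set t := exp (τ ^ 2 * r ^ 2 / 2) with ht
  have hsubset : {x : EuclideanSpace ℝ (Fin n) | r < ‖x‖}
      ⊆ {x | ENNReal.ofReal t ≤ ENNReal.ofReal (exp (τ ^ 2 * ‖x‖ ^ 2 / 2))} := by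
    intro x (hx : r < ‖x‖)
    exact ENNReal.ofReal_le_ofReal (exp_le_exp.2 (by gcongr))
  have hmarkov : ENNReal.ofReal t * μ {x | r < ‖x‖}
      ≤ ENNReal.ofReal ((1 - c * τ ^ 2) ^ (-(n : ℝ) / 2)) :=
    calc ENNReal.ofReal t * μ {x | r < ‖x‖}
        ≤ ENNReal.ofReal t * μ {x | ENNReal.ofReal t
            ≤ ENNReal.ofReal (exp (τ ^ 2 * ‖x‖ ^ 2 / 2))} := by gcongr
      _ ≤ ∫⁻ x, ENNReal.ofReal (exp (τ ^ 2 * ‖x‖ ^ 2 / 2)) ∂μ :=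
          mul_meas_ge_le_lintegral (by fun_prop) _
      _ ≤ ENNReal.ofReal ((1 - c * τ ^ 2) ^ (-(n : ℝ) / 2)) := hμ.lintegral_exp_sq_norm_le hτ hcτ
  have hreal := ENNReal.toReal_le_of_le_ofReal (rpow_nonneg (sub_pos.2 hcτ).le _) hmarkov
  rw [ENNReal.toReal_mul, ENNReal.toReal_ofReal (exp_pos _).le] at hreal
  rwa [exp_neg, ← ht, inv_mul_eq_div, le_div_iff₀' (exp_pos _)]

lemma measureReal_sqrt_mul_sqrt_lt_norm_le (hμ : IsSubgaussian μ c) (hc : 0 < c) {ε : ℝ}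
    (hε : 0 < ε) :
    μ.real {x | √((1 + ε) * n) * √c < ‖x‖} ≤ exp (-((n : ℝ) / 4) * (ε ^ 2 - ε ^ 3)) := by
  set τ := √(ε / ((1 + ε) * c))
  have hτ0 : τ ≠ 0 := by positivity
  have hτsq : τ ^ 2 = ε / ((1 + ε) * c) := sq_sqrt (by positivity)
  have hcτ : c * τ ^ 2 = 1 - (1 + ε)⁻¹ := by
    rw [hτsq]
    field_simp
    ring
  have hcτ1 : c * τ ^ 2 < 1 := by
    rw [hcτ, sub_lt_self_iff]
    positivity
  have hexponent : τ ^ 2 * (√((1 + ε) * n) * √c) ^ 2 / 2 = n / 2 * ε := by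
    rw [hτsq, mul_pow, sq_sqrt (by positivity), sq_sqrt hc.le]
    field_simp
  calc μ.real {x | √((1 + ε) * n) * √c < ‖x‖}
      ≤ exp (-(n / 2 * ε)) * (1 + ε) ^ ((n : ℝ) / 2) := by
        have htail := hμ.measureReal_lt_norm_le hτ0 hcτ1 (r := √((1 + ε) * n) * √c) (by positivity)
        rwa [hexponent, hcτ, sub_sub_cancel, neg_div, inv_rpow (by positivity),
          rpow_neg (by positivity), inv_inv] at htail
    _ ≤ exp (-(n / 2 * ε)) * exp (ε - ε ^ 2 / 2 + ε ^ 3 / 2) ^ ((n : ℝ) / 2) := by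
        gcongr
        exact one_add_le_exp_sub_sq_add_cube hε.le
    _ = exp (-((n : ℝ) / 4) * (ε ^ 2 - ε ^ 3)) := by
        rw [← exp_mul, ← exp_add]
        ring_nf

end IsSubgaussian

theorem effective_noise_tail_general (n : ℕ) (L : Submodule ℤ (EuclideanSpace ℝ (Fin n)))
    [DiscreteTopology L] (σs σw : ℝ) (hσs : 0 < σs) (hσw : 0 < σw) (α σeff : ℝ)
    (hσeff : σeff = √((1 - α) ^ 2 * σs ^ 2 + α ^ 2 * σw ^ 2)) (ε : ℝ) (hε : 0 < ε) :
    ∑' x : (L : Set (EuclideanSpace ℝ (Fin n))), gaussF n σs x / gaussMass n σs L *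
        ∫ w in {w : EuclideanSpace ℝ (Fin n) |
            √((1 + ε) * n) * σeff < ‖(1 - α) • (x : EuclideanSpace ℝ (Fin n)) + α • w‖},
          gaussF n σw w
      ≤ exp (-((n : ℝ) / 4) * (ε ^ 2 - ε ^ 3)) := by
  have hc : 0 < (1 - α) ^ 2 * σs ^ 2 + α ^ 2 * σw ^ 2 := by
    rcases eq_or_ne α 0 with rfl | hα
    · simpa using pow_pos hσs 2
    · positivity
  have hsub := (isSubgaussian_discreteGaussian L hσs.ne').map_smul_add_smul
    (isSubgaussian_gaussMeasure n hσw.ne') (1 - α) α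
  have htail := hsub.measureReal_sqrt_mul_sqrt_lt_norm_le hc hε
  have hS : MeasurableSet {v : EuclideanSpace ℝ (Fin n) | √((1 + ε) * n) * σeff < ‖v‖} :=
    measurableSet_lt measurable_const measurable_norm
  rw [← hσeff, map_measureReal_apply (by fun_prop) hS,
    ← tsum_gaussF_div_mul_setIntegral_gaussF hσw.ne' σs _ (by measurability)] at htail
  exact htail

lemma effective_variance_eq {a b α : ℝ} (hab : a + b ≠ 0) (hα : α = a / (a + b)) :
    a * b / (a + b) = (1 - α) ^ 2 * a + α ^ 2 * b := by
  rw [hα]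
  field_simp
  ring

/-- tail bound for the effective noise `W_eff = (1−α)X + αW`,
`X ~ D_{Λ',σ_s}`, `W ~ N(0,σ_w²Iₙ)`:
`Pr[‖W_eff‖ > √((1+ε)n)·σ_eff] ≤ exp(−(n/4)(ε²−ε³))`. -/
theorem effective_noise_tail (n : ℕ) (L' : Submodule ℤ (EuclideanSpace ℝ (Fin n)))
    [DiscreteTopology L'] [IsZLattice ℝ L']
    (σs σw : ℝ) (hσs : 0 < σs) (hσw : 0 < σw)
    (α σeff : ℝ)
    (hα : α = σs ^ 2 / (σs ^ 2 + σw ^ 2))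
    (hσeff : σeff = Real.sqrt (σs ^ 2 * σw ^ 2 / (σs ^ 2 + σw ^ 2)))
    (ε : ℝ) (hε0 : 0 < ε) (hε1 : ε < 1) :
    (∑' x : (L' : Set (EuclideanSpace ℝ (Fin n))),
        (gaussF n σs x / gaussMass n σs (L' : Set (EuclideanSpace ℝ (Fin n)))) *
          ∫ w in {w : EuclideanSpace ℝ (Fin n) |
              Real.sqrt ((1 + ε) * n) * σeff < ‖(1 - α) • (x : EuclideanSpace ℝ (Fin n)) + α • w‖},
            gaussF n σw w)
      ≤ Real.exp (-((n : ℝ) / 4) * (ε ^ 2 - ε ^ 3)) := by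
  rw [hσeff, effective_variance_eq (by positivity) hα]
  exact effective_noise_tail_general n L' σs σw hσs hσw α _ rfl ε hε0
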